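/- Suppose all blocks have the same dimension, k_1 = k_2 = … = k_s = t, and let 𝒞 ⊆ ℤ_m^n be an (n, K, d) (𝕡,π)-code with t dividing n − ⌈log_m K⌉. If 𝒞 is I-perfect for every ideal I of 𝕡 with |I| = ((n − ⌈log_m K⌉)/t)·l, then 𝒞 is an MDS (𝕡,π)-code. -/

import Mathlib

open scoped Classical

noncomputable section

/-- Lee weight of an element of `ZMod m`. -/
def leeWt (m : ℕ) (a : ZMod m) : ℕ := min a.val (m - a.val)

/-- Block Lee weight of the `i`-th block of `u`. -/
def blockWt (m s : ℕ) (π : Fin s → ℕ) (u : ∀ i : Fin s, Fin (π i) → ZMod m)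
    (i : Fin s) : ℕ :=
  Finset.univ.sup fun t => leeWt m (u i t)

/-- The `(𝕡,π)`-weight of `u`. -/
def pomsetWt (m s : ℕ) (P : PartialOrder (Fin s)) (π : Fin s → ℕ)
    (u : ∀ i : Fin s, Fin (π i) → ZMod m) : ℕ :=
  ∑ i : Fin s,
    if ∃ j, j ≠ i ∧ P.le i j ∧ 0 < blockWt m s π u j then m / 2
    else blockWt m s π u i

/-- The pomset block distance. -/
def pomsetDist (m s : ℕ) (P : PartialOrder (Fin s)) (π : Fin s → ℕ)
    (u v : ∀ i : Fin s, Fin (π i) → ZMod m) : ℕ :=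
  pomsetWt m s P π (u - v)

/-- An ideal of the pomset `𝕡`, given by its count function `I : [s] → {0,…,⌊m/2⌋}`. -/
def IsIdeal (m s : ℕ) (P : PartialOrder (Fin s)) (I : Fin s → ℕ) : Prop :=
  (∀ a, I a ≤ m / 2) ∧ ∀ a b, 0 < I a → P.le b a → b ≠ a → I b = m / 2

/-- An ideal has full count if every element of its root set has count `⌊m/2⌋`. -/
def FullCount (m : ℕ) {s : ℕ} (I : Fin s → ℕ) : Prop :=
  ∀ a, 0 < I a → I a = m / 2

/-- The cardinality `|I|` of an ideal. -/
def idealCard {s : ℕ} (I : Fin s → ℕ) : ℕ := ∑ a, I a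

/-- The cardinality `|I*|` of the root set of an ideal. -/
def rootCard {s : ℕ} (I : Fin s → ℕ) : ℕ :=
  (Finset.univ.filter fun a => 0 < I a).card

/-- `Σ_{i ∈ I*} k_i`. -/
def rootSum {s : ℕ} (π I : Fin s → ℕ) : ℕ :=
  ∑ a ∈ Finset.univ.filter (fun a => 0 < I a), π a

/-- The `I`-ball centered at `u`. -/
def ballI (m s : ℕ) (π : Fin s → ℕ) (I : Fin s → ℕ)
    (u : ∀ i : Fin s, Fin (π i) → ZMod m) :
    Set (∀ i : Fin s, Fin (π i) → ZMod m) :=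
  {v | ∀ i, blockWt m s π (u - v) i ≤ I i}

/-- `𝒞` is `I`-perfect: the `I`-balls centered at codewords are pairwise
disjoint and cover the whole space. -/
def IPerfect (m s : ℕ) (π : Fin s → ℕ) (I : Fin s → ℕ)
    (C : Set (∀ i : Fin s, Fin (π i) → ZMod m)) : Prop :=
  (C.Pairwise fun c c' => Disjoint (ballI m s π I c) (ballI m s π I c')) ∧
  (⋃ c ∈ C, ballI m s π I c) = Set.univ

/-- The `r`-ball centered at `u`. -/
def ballR (m s : ℕ) (P : PartialOrder (Fin s)) (π : Fin s → ℕ) (r : ℕ)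
    (u : ∀ i : Fin s, Fin (π i) → ZMod m) :
    Set (∀ i : Fin s, Fin (π i) → ZMod m) :=
  {v | pomsetDist m s P π u v ≤ r}

/-- The standard dot product on `ℤ_m^n`. -/
def dotProd (m s : ℕ) (π : Fin s → ℕ)
    (c v : ∀ i : Fin s, Fin (π i) → ZMod m) : ZMod m :=
  ∑ i, ∑ t, c i t * v i t

/-- The dual code `𝒞^⊥`. -/
def dualCode (m s : ℕ) (π : Fin s → ℕ)
    (C : Set (∀ i : Fin s, Fin (π i) → ZMod m)) :
    Set (∀ i : Fin s, Fin (π i) → ZMod m) :=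
  {v | ∀ c ∈ C, dotProd m s π c v = 0}

/-- The dual pomset, encoded by the opposite partial order. -/
def dualOrder (s : ℕ) (P : PartialOrder (Fin s)) : PartialOrder (Fin s) where
  le a b := P.le b a
  lt a b := P.lt b a
  le_refl a := P.le_refl a
  le_trans a b c h1 h2 := P.le_trans _ _ _ h2 h1
  lt_iff_le_not_ge a b := P.lt_iff_le_not_ge b a
  le_antisymm a b h1 h2 := (P.le_antisymm _ _ h1 h2).symm

/-- The minimum `(𝕡,π)`-distance of a code. -/
def minDist (m s : ℕ) (P : PartialOrder (Fin s)) (π : Fin s → ℕ)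
    (C : Set (∀ i : Fin s, Fin (π i) → ZMod m)) : ℕ :=
  sInf {r | ∃ c ∈ C, ∃ c' ∈ C, c ≠ c' ∧ r = pomsetWt m s P π (c - c')}

/-- `𝒞` is an MDS `(𝕡,π)`-code: it attains the Singleton bound
`n − ⌈log_m K⌉ ≥ max { Σ_{i∈I*} k_i : I ideal, |I*| = ⌊(d−1)/⌊m/2⌋⌋ }`. -/
def IsMDS (m s : ℕ) (P : PartialOrder (Fin s)) (π : Fin s → ℕ)
    (C : Set (∀ i : Fin s, Fin (π i) → ZMod m)) : Prop :=
  (∀ I, IsIdeal m s P I →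
      rootCard I = (minDist m s P π C - 1) / (m / 2) →
      rootSum π I ≤ (∑ i, π i) - Nat.clog m (Nat.card ↥C)) ∧
  (∃ I, IsIdeal m s P I ∧
      rootCard I = (minDist m s P π C - 1) / (m / 2) ∧
      rootSum π I = (∑ i, π i) - Nat.clog m (Nat.card ↥C))

/-- The chain pomset on `[s]`: the usual total order on `Fin s`. -/
def chainOrder (s : ℕ) : PartialOrder (Fin s) := inferInstance

/-! Let `r = (n - ⌈log_m K⌉)/t`. Packing by the balls of all ideals of cardinality `r⌊m/2⌋` forces
`d > r⌊m/2⌋`: the ideal generated by the difference of two codewords at distance at most `r⌊m/2⌋`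
could be enlarged to an ideal of that cardinality, whose balls around the two codewords would meet.
Hence `q = ⌊(d-1)/⌊m/2⌋⌋ ≥ r`. A ball of full count consists of the words that agree with its center
outside the root set, so covering by such balls says that deleting the blocks in a down-set `S` of
size `r` maps `𝒞` onto the remaining space; this gives `⌈log_m K⌉ ≥ n - ∑_{i ∈ S} k_i`. For a
down-set `T ⊇ S` of size `q`, the same deletion is injective on `𝒞` (the Singleton bound), so
`∑_{i ∈ T} k_i ≤ n - ⌈log_m K⌉ ≤ ∑_{i ∈ S} k_i ≤ ∑_{i ∈ T} k_i`, and all of these are equal. -/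

section LowerSets

variable {α : Type*} [PartialOrder α]

theorem isLowerSet_insert_of_minimal_notMem {S : Set α} (hS : IsLowerSet S) {a : α}
    (ha : Minimal (· ∉ S) a) : IsLowerSet (insert a S) := by
  rintro c b hbc (rfl | hc)
  · by_cases hb : b ∈ S
    · exact Or.inr hb
    · exact Or.inl (ha.eq_of_ge hb hbc).symm
  · exact Or.inr (hS hbc hc)

theorem exists_isLowerSet_superset_card_eq [Fintype α] {S : Finset α}
    (hS : IsLowerSet (S : Set α)) {r : ℕ} (hSr : S.card ≤ r) (hr : r ≤ Fintype.card α) :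
    ∃ T : Finset α, S ⊆ T ∧ IsLowerSet (T : Set α) ∧ T.card = r := by
  induction r, hSr using Nat.le_induction with
  | base => exact ⟨S, subset_rfl, hS, rfl⟩
  | succ r _ ih =>
    obtain ⟨T, hST, hT, rfl⟩ := ih (by omega)
    have hex : ∃ a, a ∉ T := by
      contrapose! hr
      simp [Finset.eq_univ_iff_forall.2 hr]
    obtain ⟨a, ha⟩ := exists_minimal_of_wellFoundedLT (· ∉ T) hex
    refine ⟨insert a T, hST.trans (T.subset_insert a), ?_, T.card_insert_of_notMem ha.1⟩
    rw [Finset.coe_insert]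
    exact isLowerSet_insert_of_minimal_notMem hT ha

end LowerSets

section PomsetCodes

variable {m s : ℕ} {P : PartialOrder (Fin s)} {π : Fin s → ℕ}

theorem leeWt_le (a : ZMod m) : leeWt m a ≤ m / 2 := by
  unfold leeWt
  omega

@[simp]
theorem leeWt_zero : leeWt m 0 = 0 := by
  simp [leeWt]

@[simp]
theorem leeWt_eq_zero [NeZero m] {a : ZMod m} : leeWt m a = 0 ↔ a = 0 := by
  have := a.val_lt
  rw [← ZMod.val_eq_zero, leeWt]
  omega

section Weights

variable {u : ∀ i : Fin s, Fin (π i) → ZMod m} {i : Fin s}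

theorem blockWt_le (u : ∀ i : Fin s, Fin (π i) → ZMod m) (i : Fin s) :
    blockWt m s π u i ≤ m / 2 :=
  Finset.sup_le fun _ _ => leeWt_le _

theorem blockWt_eq_zero_of_eq_zero (h : u i = 0) : blockWt m s π u i = 0 := by
  simp [blockWt, h]

theorem blockWt_eq_zero [NeZero m] : blockWt m s π u i = 0 ↔ u i = 0 := by
  refine (Finset.sup_eq_bot_iff _ _).trans ?_
  simp [funext_iff]

/-- The ideal generated by the multiset of blocks of `u` with their Lee weights, whose cardinality
is the `(𝕡,π)`-weight of `u`. -/
def weightIdeal (P : PartialOrder (Fin s)) (u : ∀ i : Fin s, Fin (π i) → ZMod m) : Fin s → ℕ :=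
  fun i => if ∃ j, j ≠ i ∧ P.le i j ∧ 0 < blockWt m s π u j then m / 2 else blockWt m s π u i

theorem idealCard_weightIdeal : idealCard (weightIdeal P u) = pomsetWt m s P π u :=
  rfl

theorem blockWt_le_weightIdeal (i : Fin s) : blockWt m s π u i ≤ weightIdeal P u i := by
  unfold weightIdeal
  split_ifs
  exacts [blockWt_le u i, le_rfl]

theorem isIdeal_weightIdeal : IsIdeal m s P (weightIdeal P u) := by
  refine ⟨fun a => ?_, fun a b ha hba hne => if_pos ?_⟩
  · unfold weightIdeal
    split_ifs
    exacts [le_rfl, blockWt_le u a]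
  · unfold weightIdeal at ha
    split_ifs at ha with h
    · obtain ⟨j, -, haj, hj⟩ := h
      refine ⟨j, ?_, P.le_trans _ _ _ hba haj, hj⟩
      rintro rfl
      exact hne (P.le_antisymm _ _ hba haj)
    · exact ⟨a, hne.symm, hba, ha⟩

theorem weightIdeal_eq_zero_of_notMem {S : Set (Fin s)} (hS : @IsLowerSet _ P.toLE S)
    (hu : ∀ i ∉ S, u i = 0) (hi : i ∉ S) : weightIdeal P u i = 0 := by
  rw [weightIdeal, if_neg, blockWt_eq_zero_of_eq_zero (hu i hi)]
  rintro ⟨j, -, hij, hj⟩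
  have hjS : j ∉ S := fun h => hi (hS hij h)
  exact hj.ne' (blockWt_eq_zero_of_eq_zero (hu j hjS))

theorem pomsetWt_le_card_mul {S : Finset (Fin s)} (hS : @IsLowerSet _ P.toLE (S : Set (Fin s)))
    (hu : ∀ i ∉ S, u i = 0) : pomsetWt m s P π u ≤ S.card * (m / 2) := by
  calc pomsetWt m s P π u = ∑ i ∈ S, weightIdeal P u i :=
        (Finset.sum_subset S.subset_univ fun i _ hi =>
          weightIdeal_eq_zero_of_notMem hS hu hi).symm
    _ ≤ S.card * (m / 2) := Finset.sum_le_card_nsmul _ _ _ fun i _ => isIdeal_weightIdeal.1 i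

end Weights

section Ideals

variable {I : Fin s → ℕ} {S : Finset (Fin s)}

/-- The root set `I*` of an ideal `I`. -/
def rootSet (I : Fin s → ℕ) : Finset (Fin s) :=
  Finset.univ.filter fun a => 0 < I a

theorem mem_rootSet {a : Fin s} : a ∈ rootSet I ↔ 0 < I a := by
  simp [rootSet]

theorem IsIdeal.isLowerSet_rootSet (hI : IsIdeal m s P I) :
    @IsLowerSet _ P.toLE (rootSet I : Set (Fin s)) := by
  intro a b hba ha
  rw [Finset.mem_coe, mem_rootSet] at ha ⊢
  obtain rfl | hne := eq_or_ne b a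
  · exact ha
  · rw [hI.2 a b ha hba hne]
    exact ha.trans_le (hI.1 a)

theorem IsIdeal.add_single_of_minimal (hI : IsIdeal m s P I) {a : Fin s}
    (ha : @Minimal _ P.toLE (I · < m / 2) a) : IsIdeal m s P (I + Pi.single a 1) := by
  have hbelow : ∀ b, P.le b a → b ≠ a → I b = m / 2 := fun b hba hne =>
    (hI.1 b).eq_of_not_lt fun hb => hne (P.le_antisymm _ _ hba (ha.2 hb hba))
  refine ⟨fun b => ?_, fun c b hc hbc hne => ?_⟩
  · obtain rfl | hb := eq_or_ne b a
    · simpa using ha.1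
    · simpa [hb] using hI.1 b
  · have hIb : I b = m / 2 := by
      obtain rfl | hca := eq_or_ne c a
      · exact hbelow b hbc hne
      · exact hI.2 c b (by simpa [hca] using hc) hbc hne
    have hba : b ≠ a := by
      rintro rfl
      exact ha.1.ne hIb
    simpa [hba] using hIb

theorem IsIdeal.exists_le_idealCard_eq (hI : IsIdeal m s P I) {k : ℕ} (hk : idealCard I ≤ k)
    (hks : k ≤ s * (m / 2)) : ∃ J, I ≤ J ∧ IsIdeal m s P J ∧ idealCard J = k := by
  induction k, hk using Nat.le_induction with
  | base => exact ⟨I, le_rfl, hI, rfl⟩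
  | succ k _ ih =>
    obtain ⟨J, hIJ, hJ, rfl⟩ := ih (by omega)
    have hex : ∃ a, J a < m / 2 := by
      contrapose! hks
      calc s * (m / 2) = ∑ _a : Fin s, m / 2 := by simp
        _ ≤ idealCard J := Finset.sum_le_sum fun a _ => hks a
        _ < idealCard J + 1 := Nat.lt_succ_self _
    obtain ⟨a, ha⟩ := @exists_minimal_of_wellFoundedLT _ P.toPreorder _ (J · < m / 2) hex
    refine ⟨J + Pi.single a 1, hIJ.trans le_self_add, hJ.add_single_of_minimal ha, ?_⟩
    simp [idealCard, Finset.sum_add_distrib]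

/-- The count function of the ideal of full count with root set `S`. -/
def fullCountIdeal (m : ℕ) (S : Finset (Fin s)) : Fin s → ℕ :=
  fun i => if i ∈ S then m / 2 else 0

theorem isIdeal_fullCountIdeal (hS : @IsLowerSet _ P.toLE (S : Set (Fin s))) :
    IsIdeal m s P (fullCountIdeal m S) := by
  refine ⟨fun a => ?_, fun a b ha hba _ => if_pos (hS hba ?_)⟩
  · unfold fullCountIdeal
    split_ifs
    exacts [le_rfl, Nat.zero_le _]
  · exact Finset.mem_coe.2 (by_contra fun haS => ha.ne' (if_neg haS))

theorem idealCard_fullCountIdeal : idealCard (fullCountIdeal m S) = S.card * (m / 2) := by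
  simp [idealCard, fullCountIdeal]

theorem rootSet_fullCountIdeal (hm : 2 ≤ m) : rootSet (fullCountIdeal m S) = S := by
  have hl : 0 < m / 2 := by omega
  ext a
  rw [mem_rootSet, fullCountIdeal]
  split_ifs with ha <;> simp [ha, hl]

theorem rootCard_fullCountIdeal (hm : 2 ≤ m) : rootCard (fullCountIdeal m S) = S.card :=
  congrArg Finset.card (rootSet_fullCountIdeal hm)

theorem rootSum_fullCountIdeal (hm : 2 ≤ m) : rootSum π (fullCountIdeal m S) = ∑ i ∈ S, π i :=
  congrArg (∑ i ∈ ·, π i) (rootSet_fullCountIdeal hm)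

end Ideals

section Codes

variable {I : Fin s → ℕ} {S : Finset (Fin s)} {C : Set (∀ i : Fin s, Fin (π i) → ZMod m)}

theorem minDist_le_pomsetWt {c c' : ∀ i : Fin s, Fin (π i) → ZMod m} (hc : c ∈ C) (hc' : c' ∈ C)
    (hne : c ≠ c') : minDist m s P π C ≤ pomsetWt m s P π (c - c') :=
  Nat.sInf_le ⟨c, hc, c', hc', hne, rfl⟩

theorem exists_pomsetWt_eq_minDist (hC : C.Nontrivial) :
    ∃ c ∈ C, ∃ c' ∈ C, c ≠ c' ∧ minDist m s P π C = pomsetWt m s P π (c - c') := by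
  obtain ⟨c, hc, c', hc', hne⟩ := hC
  exact Nat.sInf_mem (s := {r | ∃ c ∈ C, ∃ c' ∈ C, c ≠ c' ∧ r = pomsetWt m s P π (c - c')})
    ⟨_, c, hc, c', hc', hne, rfl⟩

theorem minDist_le_mul (hC : C.Nontrivial) : minDist m s P π C ≤ s * (m / 2) := by
  obtain ⟨c, -, c', -, -, hd⟩ := exists_pomsetWt_eq_minDist (P := P) hC
  rw [hd]
  simpa using pomsetWt_le_card_mul (P := P) (u := c - c') (S := Finset.univ)
    (fun _ _ _ _ => Finset.mem_coe.2 (Finset.mem_univ _)) (by simp)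

theorem lt_minDist_of_pairwiseDisjoint_ballI (hC : C.Nontrivial) {k : ℕ} (hk : k ≤ s * (m / 2))
    (hdisj : ∀ I, IsIdeal m s P I → idealCard I = k → C.PairwiseDisjoint (ballI m s π I)) :
    k < minDist m s P π C := by
  obtain ⟨c, hc, c', hc', hne, hd⟩ := exists_pomsetWt_eq_minDist (P := P) hC
  by_contra! hle
  obtain ⟨J, hIJ, hJ, hJk⟩ := isIdeal_weightIdeal.exists_le_idealCard_eq
    (idealCard_weightIdeal.trans_le (hd.symm.trans_le hle)) hk
  have hc'c : c' ∈ ballI m s π J c := fun i => (blockWt_le_weightIdeal i).trans (hIJ i)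
  have hc'c' : c' ∈ ballI m s π J c' := fun i =>
    (blockWt_eq_zero_of_eq_zero (by simp)).trans_le (Nat.zero_le _)
  exact Set.disjoint_left.1 (hdisj J hJ hJk hc hc' hne) hc'c hc'c'

theorem mem_ballI_fullCountIdeal [NeZero m] {u v : ∀ i : Fin s, Fin (π i) → ZMod m} :
    v ∈ ballI m s π (fullCountIdeal m S) u ↔ ∀ i ∉ S, u i = v i := by
  refine forall_congr' fun i => ?_
  by_cases hi : i ∈ S
  · simp [fullCountIdeal, hi, blockWt_le]
  · simp [fullCountIdeal, hi, blockWt_eq_zero, sub_eq_zero]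

theorem surjOn_restrict_compl_of_iUnion_ballI [NeZero m]
    (hcover : ⋃ c ∈ C, ballI m s π (fullCountIdeal m S) c = Set.univ) :
    Set.SurjOn Sᶜ.restrict C (Set.univ : Set (∀ i : ↥Sᶜ, Fin (π i) → ZMod m)) := by
  intro w _
  obtain ⟨v, rfl⟩ :=
    Subtype.surjective_restrict (β := fun i => Fin (π i) → ZMod m) (· ∈ Sᶜ) w
  obtain ⟨c, hc, hcv⟩ := Set.mem_iUnion₂.1 (hcover ▸ Set.mem_univ v)
  refine ⟨c, hc, ?_⟩
  ext ⟨i, hi⟩ : 1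
  exact mem_ballI_fullCountIdeal.1 hcv i (Finset.mem_compl.1 hi)

theorem injOn_restrict_compl_of_lt_minDist (hS : @IsLowerSet _ P.toLE (S : Set (Fin s)))
    (hd : S.card * (m / 2) < minDist m s P π C) : Set.InjOn Sᶜ.restrict C := by
  intro c hc c' hc' heq
  by_contra hne
  have hwt : pomsetWt m s P π (c - c') ≤ S.card * (m / 2) := pomsetWt_le_card_mul hS fun i hi =>
    sub_eq_zero.2 (congrFun heq ⟨i, Finset.mem_compl.2 hi⟩)
  exact (hd.trans_le (minDist_le_pomsetWt hc hc' hne)).not_ge hwt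

theorem natCard_pi_compl_zmod {ι : Type*} [Fintype ι] [DecidableEq ι] (m : ℕ) (k : ι → ℕ)
    (S : Finset ι) :
    Nat.card (∀ i : ↥Sᶜ, Fin (k i) → ZMod m) = m ^ (∑ i, k i - ∑ i ∈ S, k i) := by
  have hsum : ∑ i, k i - ∑ i ∈ S, k i = ∑ i : ↥Sᶜ, k i := by
    rw [← Finset.sum_add_sum_compl S, Nat.add_sub_cancel_left, Finset.sum_coe_sort]
  simp [Nat.card_pi, hsum, Finset.prod_pow_eq_pow_sum]

theorem singleton_bound [NeZero m] (hI : IsIdeal m s P I)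
    (hd : rootCard I * (m / 2) < minDist m s P π C) :
    rootSum π I ≤ ∑ i, π i - Nat.clog m (Nat.card C) := by
  have hcard : Nat.card C ≤ m ^ (∑ i, π i - rootSum π I) :=
    natCard_pi_compl_zmod m π (rootSet I) ▸ Nat.card_le_card_of_injective _
      (injOn_restrict_compl_of_lt_minDist hI.isLowerSet_rootSet hd).injective
  have hclog := Nat.clog_le_of_le_pow hcard
  have hsum : rootSum π I ≤ ∑ i, π i := Finset.sum_le_univ_sum_of_nonneg fun _ => Nat.zero_le _
  omega

theorem sub_clog_le_sum_of_iUnion_ballI (hm : 2 ≤ m)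
    (hcover : ⋃ c ∈ C, ballI m s π (fullCountIdeal m S) c = Set.univ) :
    ∑ i, π i - Nat.clog m (Nat.card C) ≤ ∑ i ∈ S, π i := by
  have : NeZero m := ⟨by omega⟩
  have hcard : m ^ (∑ i, π i - ∑ i ∈ S, π i) ≤ Nat.card C := by
    rw [← natCard_pi_compl_zmod]
    exact Nat.card_le_card_of_surjective _
      (Set.surjOn_iff_surjective.1 (surjOn_restrict_compl_of_iUnion_ballI hcover))
  have hclog := Nat.clog_mono_right m hcard
  rw [Nat.clog_pow _ _ hm] at hclog
  omega

theorem isMDS_of_lt_minDist_of_iUnion_ballI (hm : 2 ≤ m) (hC : C.Nontrivial)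
    (hS : @IsLowerSet _ P.toLE (S : Set (Fin s))) (hd : S.card * (m / 2) < minDist m s P π C)
    (hcover : ⋃ c ∈ C, ballI m s π (fullCountIdeal m S) c = Set.univ) : IsMDS m s P π C := by
  have : NeZero m := ⟨by omega⟩
  have hl : 0 < m / 2 := by omega
  let q := (minDist m s P π C - 1) / (m / 2)
  have hqd : q * (m / 2) < minDist m s P π C :=
    (Nat.div_mul_le_self _ _).trans_lt (Nat.sub_one_lt (by omega))
  have hSq : S.card ≤ q := (Nat.le_div_iff_mul_le hl).2 (by omega)
  have hqs : q ≤ s := Nat.le_of_mul_le_mul_right (hqd.le.trans (minDist_le_mul hC)) hl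
  obtain ⟨T, hST, hT, hTq⟩ :=
    @exists_isLowerSet_superset_card_eq _ P _ S hS q hSq (by simpa using hqs)
  have hTideal : IsIdeal m s P (fullCountIdeal m T) := isIdeal_fullCountIdeal hT
  have hTcard : rootCard (fullCountIdeal m T) = q := (rootCard_fullCountIdeal hm).trans hTq
  refine ⟨fun I hI hIq => singleton_bound hI (hIq ▸ hqd), fullCountIdeal m T, hTideal, hTcard,
    (singleton_bound hTideal (hTcard ▸ hqd)).antisymm ?_⟩
  calc ∑ i, π i - Nat.clog m (Nat.card C)
      ≤ ∑ i ∈ S, π i := sub_clog_le_sum_of_iUnion_ballI hm hcover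
    _ ≤ ∑ i ∈ T, π i := Finset.sum_le_sum_of_subset hST
    _ = rootSum π (fullCountIdeal m T) := (rootSum_fullCountIdeal hm).symm

theorem all_I_perfect_implies_mds_general {r : ℕ} (hm : 2 ≤ m) (hr : r ≤ s) (hC : C.Nontrivial)
    (hperf : ∀ I, IsIdeal m s P I → idealCard I = r * (m / 2) → IPerfect m s π I C) :
    IsMDS m s P π C := by
  obtain ⟨S, -, hS, rfl⟩ := @exists_isLowerSet_superset_card_eq _ P _ ∅
    (by simp [IsLowerSet]) r (by simp) (by simpa using hr)
  have hd : S.card * (m / 2) < minDist m s P π C :=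
    lt_minDist_of_pairwiseDisjoint_ballI hC (Nat.mul_le_mul_right _ hr)
      fun I hI hIr => (hperf I hI hIr).1
  exact isMDS_of_lt_minDist_of_iUnion_ballI hm hC hS hd
    (hperf _ (isIdeal_fullCountIdeal hS) idealCard_fullCountIdeal).2

end Codes

end PomsetCodes

/-- a code that is `I`-perfect for every ideal of cardinality
`((n − ⌈log_m K⌉)/t)·⌊m/2⌋` is MDS. -/
theorem all_I_perfect_implies_mds
    (m s : ℕ) (hm : 4 ≤ m) (hs : 1 ≤ s)
    (P : PartialOrder (Fin s)) (π : Fin s → ℕ) (hπ : ∀ i, 0 < π i)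
    (t : ℕ) (ht : ∀ i, π i = t)
    (n K d : ℕ) (hn : n = ∑ i, π i)
    (C : Set (∀ i : Fin s, Fin (π i) → ZMod m))
    (hK : Nat.card ↥C = K) (hK2 : 2 ≤ K)
    (hd : IsLeast {r | ∃ c ∈ C, ∃ c' ∈ C, c ≠ c' ∧
      r = pomsetWt m s P π (c - c')} d)
    (hdiv : t ∣ (n - Nat.clog m K))
    (hperf : ∀ I, IsIdeal m s P I →
      idealCard I = ((n - Nat.clog m K) / t) * (m / 2) →
      IPerfect m s π I C) :
    IsMDS m s P π C := by
  obtain ⟨c, hc, c', hc', hne, -⟩ := hd.1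
  have hr : (n - Nat.clog m K) / t ≤ s := Nat.div_le_of_le_mul (by simp [hn, ht, mul_comm])
  exact all_I_perfect_implies_mds_general (by omega) hr ⟨c, hc, c', hc', hne⟩ hperf

end
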